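/- Let d ∈ (−1/2, 0] and let (x,y) lie in the triangle OBJ with y > 0. Then (x − d)(x + y) < d + 1, so that u = √((−x² − xy + dx + dy + d + 1)/2) satisfies u > 0; and if in addition s₃(x,y,d) ≥ 0, then every entry of the matrix B(x,y) is nonnegative, where B(x,y) is 1/(2u²) times the 5×5 real symmetric matrix with rows (0, 0, 2u³, 0, 2u³), (0, 0, 0, (d+1)y, v), (2u³, 0, 0, v, s₃/3), (0, (d+1)y, v, 0, 0), (2u³, v, s₃/3, 0, 0), with v = √((x+y)(x+1)(x−d)(x−d−1)(x+y+1)(x+y−d−1)) and s₃ = s₃(x,y,d). -/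

import Mathlib

open Matrix

/-!
Since `0 ≤ x - d < d + 1` and `x + y ≤ 1`, we get `(x - d) * (x + y) ≤ x - d < d + 1`. The radicand
of `u` is half of `d + 1 - (x - d) * (x + y)`, hence positive. In the radicand of `v` exactly two
factors, `x - d - 1` and `x + y - d - 1`, are nonpositive, so `v` is a genuine square root. The
entries of `B` are then nonnegative one by one.
-/

namespace HouseRealization

/-- The weighted adjacency matrix of the house graph, which is the 5-cycle `0 - 2 - 3 - 1 - 4 - 0`
with the chord `2 - 4`. The roof edges at the vertex `0` have weight `r`, the walls `2 - 3` and
`1 - 4` weight `w`, the floor `1 - 3` weight `f` and the ceiling `2 - 4` weight `c`. This is the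
shape of the matrix `B`. -/
def houseMatrix {R : Type*} [Zero R] (r w f c : R) : Matrix (Fin 5) (Fin 5) R :=
  !![0, 0, r, 0, r;
     0, 0, 0, f, w;
     r, 0, 0, w, c;
     0, f, w, 0, 0;
     r, w, c, 0, 0]

theorem houseMatrix_nonneg {R : Type*} [Zero R] [Preorder R] {r w f c : R}
    (hr : 0 ≤ r) (hw : 0 ≤ w) (hf : 0 ≤ f) (hc : 0 ≤ c) (i j : Fin 5) :
    0 ≤ houseMatrix r w f c i j := by
  fin_cases i <;> fin_cases j <;> simp [houseMatrix, hr, hw, hf, hc]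

/-- The sum `s₃` of the cubes of `1, x, y, d - x - y, -d - 1`, the prescribed eigenvalues of `B`. -/
def cubeSum (d x y : ℝ) : ℝ := 1 + x ^ 3 + y ^ 3 + (d - x - y) ^ 3 + (-d - 1) ^ 3

/-- The parameter `u`, which is the weight of the roof edges of `B`. -/
noncomputable def roofWeight (d x y : ℝ) : ℝ :=
  √((-x ^ 2 - x * y + d * x + d * y + d + 1) / 2)

/-- The radicand of the parameter `v`, kept separate because `√` is `0` on negative numbers. -/
def wallRadicand (d x y : ℝ) : ℝ :=
  (x + y) * (x + 1) * (x - d) * (x - d - 1) * (x + y + 1) * (x + y - d - 1)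

/-- The matrix `B(x,y)`, a house matrix with eigenvalues `1, x, y, d - x - y, -d - 1` as long as
`u ≠ 0` and the radicand of `v` is nonnegative. -/
noncomputable def realization (d x y : ℝ) : Matrix (Fin 5) (Fin 5) ℝ :=
  (1 / (2 * roofWeight d x y ^ 2)) •
    houseMatrix (2 * roofWeight d x y ^ 3) √(wallRadicand d x y) ((d + 1) * y) (cubeSum d x y / 3)

variable {d x y : ℝ}

theorem sub_mul_add_lt (hdx : d ≤ x) (hx : x < 2 * d + 1) (hxy : x + y ≤ 1) :
    (x - d) * (x + y) < d + 1 :=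
  calc (x - d) * (x + y) ≤ x - d := mul_le_of_le_one_right (sub_nonneg.mpr hdx) hxy
    _ < d + 1 := by linarith

theorem roofWeight_pos_iff : 0 < roofWeight d x y ↔ (x - d) * (x + y) < d + 1 := by
  have radicand_eq : (-x ^ 2 - x * y + d * x + d * y + d + 1) / 2 =
      (d + 1 - (x - d) * (x + y)) / 2 := by ring
  rw [roofWeight, Real.sqrt_pos, radicand_eq, div_pos_iff_of_pos_right two_pos, sub_pos]

theorem wallRadicand_nonneg (hdx : d ≤ x) (hx₀ : -1 ≤ x) (hx : x ≤ d + 1)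
    (hxy₀ : 0 ≤ x + y) (hxy : x + y ≤ d + 1) : 0 ≤ wallRadicand d x y := by
  have flipped_factors : wallRadicand d x y =
      (x + y) * (x + 1) * (x - d) * (x + y + 1) * ((d + 1 - x) * (d + 1 - (x + y))) := by
    rw [wallRadicand]; ring
  have x_add_one_nonneg : 0 ≤ x + 1 := by linarith
  rw [flipped_factors]
  exact mul_nonneg
    (mul_nonneg (mul_nonneg (mul_nonneg hxy₀ x_add_one_nonneg) (sub_nonneg.mpr hdx))
      (add_nonneg hxy₀ zero_le_one))
    (mul_nonneg (sub_nonneg.mpr hx) (sub_nonneg.mpr hxy))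

theorem realization_nonneg (hd : -1 ≤ d) (hy : 0 ≤ y) (hs : 0 ≤ cubeSum d x y) (i j : Fin 5) :
    0 ≤ realization d x y i j := by
  have roof_nonneg : 0 ≤ roofWeight d x y := Real.sqrt_nonneg _
  have floor_nonneg : 0 ≤ (d + 1) * y := mul_nonneg (by linarith) hy
  exact mul_nonneg (by positivity)
    (houseMatrix_nonneg (by positivity) (Real.sqrt_nonneg _) floor_nonneg (by positivity) i j)

end HouseRealization

open HouseRealization

theorem stmt_19_general {d x y : ℝ} (hy : 0 ≤ y) (hdx : d ≤ x) (hx : x < 2 * d + 1)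
    (hxy₀ : 0 ≤ x + y) (hxy₁ : x + y ≤ 1) (hxy : x + y ≤ d + 1) :
    (x - d) * (x + y) < d + 1 ∧ 0 ≤ wallRadicand d x y ∧ 0 < roofWeight d x y ∧
      (0 ≤ cubeSum d x y → ∀ i j, 0 ≤ realization d x y i j) := by
  have neg_one_le_d : -1 ≤ d := by linarith
  have key : (x - d) * (x + y) < d + 1 := sub_mul_add_lt hdx hx hxy₁
  exact ⟨key, wallRadicand_nonneg hdx (by linarith) (by linarith) hxy₀ hxy,
    roofWeight_pos_iff.mpr key, realization_nonneg neg_one_le_d hy⟩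

theorem stmt_19 (d x y : ℝ) (hd : d ∈ Set.Ioc (-1/2 : ℝ) 0)
    (hy0 : 0 < y) (hyx : y ≤ x) (hxy : y ≤ -x + 2*d + 1) :
    (x - d)*(x + y) < d + 1 ∧
    (let s₃ := 1 + x^3 + y^3 + (d - x - y)^3 + (-d - 1)^3;
     let u := Real.sqrt ((-x^2 - x*y + d*x + d*y + d + 1)/2);
     let v := Real.sqrt ((x + y)*(x + 1)*(x - d)*(x - d - 1)*(x + y + 1)*(x + y - d - 1));
     let B : Matrix (Fin 5) (Fin 5) ℝ := (1/(2*u^2)) •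
       !![0,      0,        2*u^3, 0,        2*u^3;
          0,      0,        0,     (d + 1)*y, v;
          2*u^3,  0,        0,     v,        s₃/3;
          0,      (d + 1)*y, v,    0,        0;
          2*u^3,  v,        s₃/3,  0,        0];
     0 < u ∧ (0 ≤ s₃ → ∀ i j, 0 ≤ B i j)) := by
  obtain ⟨-, hd0⟩ := hd
  obtain ⟨key, -, u_pos, B_nonneg⟩ := stmt_19_general (d := d) (x := x) (y := y) hy0.le
    (by linarith) (by linarith) (by linarith) (by linarith) (by linarith)
  exact ⟨key, u_pos, B_nonneg⟩
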